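/- (Conditional ATT representation of the outcome-mean contrast.) Fix d in {(1,1),(0,1),(1,0)} and d' = (0,0), with P(D = d | X) > 0 and P(D = d' | X) > 0 a.s. Suppose the no-anticipation condition E[Y0(d) | D = d, X] = E[Y0(d') | D = d, X] a.s. holds, and the parallel-trends condition E[Y2(d') − Y0(d') | D = e, X] = E[Y2(d') − Y0(d') | X] a.s. holds for e = d and for e = d'. Then m_d(X) − m_{d'}(X) = E[Y2(d) − Y2(d') | D = d, X] a.s. -/

import Mathlib

open MeasureTheory Set
open scoped Classical

noncomputable section

namespace DIDMissing

variable {Ω : Type*} {𝓧 : Type*}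

/-- Real-valued indicator of a set. -/
def ind (A : Set Ω) : Ω → ℝ := A.indicator fun _ => (1 : ℝ)

/-- All treatment paths `{0,1}²` (coded as reals). -/
def allPaths : Set (ℝ × ℝ) := {(0, 0), (0, 1), (1, 0), (1, 1)}

/-- The three treated paths `{(1,1), (0,1), (1,0)}`. -/
def threePaths : Set (ℝ × ℝ) := {(1, 1), (0, 1), (1, 0)}

/-- The event `{D = d}` for a treatment path `d = (d₁, d₂)`. -/
def evD (D1 D2 : Ω → ℝ) (d : ℝ × ℝ) : Set Ω := {ω | D1 ω = d.1 ∧ D2 ω = d.2}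

/-- The event `{D₂ = b}`. -/
def evD2 (D2 : Ω → ℝ) (b : ℝ) : Set Ω := {ω | D2 ω = b}

/-- `g` is a (measurable-in-the-covariate) version of the conditional mean `E[Z ∣ A, X]`:
for every bounded measurable `h`, `E[1_A · Z · h(X)] = E[1_A · g(X) · h(X)]`. -/
def IsCondMeanGiven [MeasurableSpace Ω] [MeasurableSpace 𝓧] (P : Measure Ω) (X : Ω → 𝓧)
    (A : Set Ω) (Z : Ω → ℝ) (g : 𝓧 → ℝ) : Prop :=
  Measurable g ∧
    ∀ h : 𝓧 → ℝ, Measurable h → (∃ C, ∀ x, |h x| ≤ C) →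
      ∫ ω, ind A ω * Z ω * h (X ω) ∂P = ∫ ω, ind A ω * g (X ω) * h (X ω) ∂P

/-- Assumption DID for a path `d` relative to `d' = (0,0)`:
(i) no anticipation, `E[Y₀(d) ∣ D = d, X] = E[Y₀(0,0) ∣ D = d, X]` a.s., stated in the
version-free integral form; and (ii) conditional parallel trends, stated as the existence
of a common version of `E[Y₂(0,0) − Y₀(0,0) ∣ X]` and `E[Y₂(0,0) − Y₀(0,0) ∣ D = d, X]`. -/
def DID [MeasurableSpace Ω] [MeasurableSpace 𝓧] (P : Measure Ω) (X : Ω → 𝓧)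
    (D1 D2 : Ω → ℝ) (Y0p Y2p : ℝ × ℝ → Ω → ℝ) (d : ℝ × ℝ) : Prop :=
  (∀ h : 𝓧 → ℝ, Measurable h → (∃ C, ∀ x, |h x| ≤ C) →
      ∫ ω, ind (evD D1 D2 d) ω * Y0p d ω * h (X ω) ∂P
        = ∫ ω, ind (evD D1 D2 d) ω * Y0p (0, 0) ω * h (X ω) ∂P) ∧
  (∃ tr : 𝓧 → ℝ,
      IsCondMeanGiven P X Set.univ (fun ω => Y2p (0, 0) ω - Y0p (0, 0) ω) tr ∧
      IsCondMeanGiven P X (evD D1 D2 d) (fun ω => Y2p (0, 0) ω - Y0p (0, 0) ω) tr)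

/-- Assumption MAR: `S ⟂ (D₁, ΔY) ∣ (D₂, X)`, where `q d₂` is a version of the
missing-data probability `P(S = 1 ∣ D₂ = d₂, X)`, which is `(0,1]`-valued a.s. -/
def MAR [MeasurableSpace Ω] [MeasurableSpace 𝓧] (P : Measure Ω) (X : Ω → 𝓧)
    (D1 D2 S Y0 Y2 : Ω → ℝ) (q : ℝ → 𝓧 → ℝ) : Prop :=
  (∀ d2 ∈ ({0, 1} : Set ℝ), IsCondMeanGiven P X (evD2 D2 d2) S (q d2)) ∧
  (∀ d2 ∈ ({0, 1} : Set ℝ), ∀ᵐ ω ∂P, 0 < q d2 (X ω) ∧ q d2 (X ω) ≤ 1) ∧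
  (∀ d2 ∈ ({0, 1} : Set ℝ), ∀ f : ℝ × ℝ → ℝ, Measurable f → (∃ C, ∀ p, |f p| ≤ C) →
      ∀ h : 𝓧 → ℝ, Measurable h → (∃ C, ∀ x, |h x| ≤ C) →
        ∫ ω, ind (evD2 D2 d2) ω * S ω * f (D1 ω, Y2 ω - Y0 ω) * h (X ω) ∂P
          = ∫ ω, ind (evD2 D2 d2) ω * q d2 (X ω) * f (D1 ω, Y2 ω - Y0 ω) * h (X ω) ∂P)

/-- The path-dependent ATT `τ_{d,(0,0)} = E[Y₂(d) − Y₂(0,0) ∣ D = d]`. -/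
def tau [MeasurableSpace Ω] (P : Measure Ω) (D1 D2 : Ω → ℝ)
    (Y2p : ℝ × ℝ → Ω → ℝ) (d : ℝ × ℝ) : ℝ :=
  (P (evD D1 D2 d)).toReal⁻¹ * ∫ ω in evD D1 D2 d, (Y2p d ω - Y2p (0, 0) ω) ∂P

/-!
For integrable `Z`, a version `g` of `E[Z ∣ A, X]` satisfies `g ∘ X = E_A[Z ∣ σ(X)]` almost surely
under the restriction of `P` to `A`, so the linearity of conditional expectation is available on
each group. On the treated group, no anticipation replaces `Y₀(d)` by `Y₀(d')`, and the contrast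
`m_d − E[Y₂(d) − Y₂(d') ∣ D = d, X]` becomes the untreated trend `E[Y₂(d') − Y₀(d') ∣ D = d, X]`; on
the comparison group `m_{d'}` is already that trend. Parallel trends identifies both with
`E[Y₂(d') − Y₀(d') ∣ X]`, and since each group has positive probability given `X`, an identity
between functions of `X` that holds almost surely on a group holds almost surely.
-/

section CondMean

variable [MeasurableSpace Ω] [m𝓧 : MeasurableSpace 𝓧] {P : Measure Ω} {X : Ω → 𝓧} {A : Set Ω}
  {Z W : Ω → ℝ} {g g' p : 𝓧 → ℝ}

/-- Equality of the conditional means `E[Z ∣ A, X]` and `E[W ∣ A, X]`, expressed without choosing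
versions by testing against bounded measurable functions of `X`. In these terms,
`IsCondMeanGiven P X A Z g` says that `g` is measurable and `CondMeanEq P X A Z (g ∘ X)`. -/
def CondMeanEq (P : Measure Ω) (X : Ω → 𝓧) (A : Set Ω) (Z W : Ω → ℝ) : Prop :=
  ∀ h : 𝓧 → ℝ, Measurable h → (∃ C, ∀ x, |h x| ≤ C) →
    ∫ ω, ind A ω * Z ω * h (X ω) ∂P = ∫ ω, ind A ω * W ω * h (X ω) ∂P

lemma integral_ind_mul_indicator (hX : Measurable X) (hA : MeasurableSet A) {T : Set 𝓧}
    (hT : MeasurableSet T) (Z : Ω → ℝ) :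
    ∫ ω, ind A ω * Z ω * T.indicator (fun _ ↦ 1) (X ω) ∂P =
      ∫ ω in X ⁻¹' T, Z ω ∂P.restrict A := by
  rw [← integral_indicator (hX hT), ← integral_indicator hA]
  congr 1 with ω
  by_cases hωA : ω ∈ A <;> by_cases hωT : X ω ∈ T <;> simp [ind, hωA, hωT]

lemma CondMeanEq.setIntegral_preimage_eq (h : CondMeanEq P X A Z W) (hX : Measurable X)
    (hA : MeasurableSet A) {T : Set 𝓧} (hT : MeasurableSet T) :
    ∫ ω in X ⁻¹' T, Z ω ∂P.restrict A = ∫ ω in X ⁻¹' T, W ω ∂P.restrict A := by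
  have hbdd : ∃ C, ∀ x, |T.indicator (fun _ ↦ (1 : ℝ)) x| ≤ C :=
    ⟨1, fun x ↦ by by_cases hx : x ∈ T <;> simp [hx]⟩
  simpa only [integral_ind_mul_indicator hX hA hT] using
    h (T.indicator fun _ ↦ 1) (measurable_const.indicator hT) hbdd

lemma CondMeanEq.indicator_preimage (h : CondMeanEq P X A Z W) {S : Set 𝓧}
    (hS : MeasurableSet S) :
    CondMeanEq P X A ((X ⁻¹' S).indicator Z) ((X ⁻¹' S).indicator W) := by
  rintro k hk ⟨C, hC⟩
  have hbdd : ∃ C, ∀ x, |S.indicator k x| ≤ C :=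
    ⟨C, fun x ↦ (norm_indicator_le_norm_self k x).trans (hC x)⟩
  convert h (S.indicator k) (hk.indicator hS) hbdd using 3 with ω ω <;>
    by_cases hω : X ω ∈ S <;> simp [hω]

lemma CondMeanEq.condExp_ae_eq [IsFiniteMeasure P] (h : CondMeanEq P X A Z W)
    (hX : Measurable X) (hA : MeasurableSet A) (hZ : Integrable Z (P.restrict A))
    (hW : Integrable W (P.restrict A)) :
    (P.restrict A)[Z | m𝓧.comap X] =ᵐ[P.restrict A] (P.restrict A)[W | m𝓧.comap X] := by
  refine ae_eq_condExp_of_forall_setIntegral_eq hX.comap_le hW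
    (fun _ _ _ ↦ integrable_condExp.integrableOn) ?_
    stronglyMeasurable_condExp.aestronglyMeasurable
  rintro _ ⟨T, hT, rfl⟩ -
  rw [setIntegral_condExp hX.comap_le hZ ⟨T, hT, rfl⟩, h.setIntegral_preimage_eq hX hA hT]

lemma IsCondMeanGiven.congr (hg : IsCondMeanGiven P X A Z g) (hZW : EqOn Z W A) :
    IsCondMeanGiven P X A W g := by
  refine ⟨hg.1, fun h hh hb ↦ ?_⟩
  rw [← hg.2 h hh hb]
  congr 1 with ω
  by_cases hω : ω ∈ A
  · rw [hZW hω]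
  · simp [ind, hω]

/-- Nothing in `IsCondMeanGiven` says that `g ∘ X` is integrable, so the identity is obtained on
each truncation `{|g ∘ X| ≤ n}`; integrability is then a consequence. -/
lemma IsCondMeanGiven.ae_eq_condExp [IsFiniteMeasure P] (hg : IsCondMeanGiven P X A Z g)
    (hX : Measurable X) (hA : MeasurableSet A) (hZ : Integrable Z (P.restrict A)) :
    g ∘ X =ᵐ[P.restrict A] (P.restrict A)[Z | m𝓧.comap X] := by
  let S (n : ℕ) : Set 𝓧 := {x | |g x| ≤ n}
  have hS (n : ℕ) : MeasurableSet (S n) := measurableSet_le hg.1.abs measurable_const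
  have truncated (n : ℕ) : (X ⁻¹' S n).indicator (g ∘ X) =ᵐ[P.restrict A]
      (X ⁻¹' S n).indicator ((P.restrict A)[Z | m𝓧.comap X]) := by
    have hmeas : Measurable[m𝓧.comap X] ((X ⁻¹' S n).indicator (g ∘ X)) :=
      (hg.1.comp (comap_measurable X)).indicator ⟨S n, hS n, rfl⟩
    have hint : Integrable ((X ⁻¹' S n).indicator (g ∘ X)) (P.restrict A) :=
      .of_bound (hmeas.mono hX.comap_le le_rfl).aestronglyMeasurable n <| .of_forall fun ω ↦ by
        by_cases hω : ω ∈ X ⁻¹' S n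
        · rw [indicator_of_mem hω]
          exact hω
        · simp [indicator_of_notMem hω]
    have heq : (P.restrict A)[(X ⁻¹' S n).indicator Z | m𝓧.comap X] =ᵐ[P.restrict A]
        (P.restrict A)[(X ⁻¹' S n).indicator (g ∘ X) | m𝓧.comap X] :=
      CondMeanEq.condExp_ae_eq (CondMeanEq.indicator_preimage hg.2 (hS n)) hX hA
        (hZ.indicator (hX (hS n))) hint
    rw [condExp_of_stronglyMeasurable hX.comap_le hmeas.stronglyMeasurable hint] at heq
    exact heq.symm.trans (condExp_indicator hZ ⟨S n, hS n, rfl⟩)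
  filter_upwards [ae_all_iff.2 truncated] with ω hω
  obtain ⟨n, hn⟩ := exists_nat_ge |g (X ω)|
  have hωS : ω ∈ X ⁻¹' S n := hn
  simpa only [indicator_of_mem hωS] using hω n

lemma IsCondMeanGiven.ae_eq [IsFiniteMeasure P] (hg : IsCondMeanGiven P X A Z g)
    (hg' : IsCondMeanGiven P X A Z g') (hX : Measurable X) (hA : MeasurableSet A)
    (hZ : Integrable Z (P.restrict A)) : g ∘ X =ᵐ[P.restrict A] g' ∘ X :=
  (hg.ae_eq_condExp hX hA hZ).trans (hg'.ae_eq_condExp hX hA hZ).symm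

lemma IsCondMeanGiven.map_absolutelyContinuous_map_restrict [IsFiniteMeasure P]
    (hp : IsCondMeanGiven P X univ (ind A) p) (hppos : ∀ᵐ ω ∂P, 0 < p (X ω))
    (hX : Measurable X) (hA : MeasurableSet A) :
    P.map X ≪ (P.restrict A).map X := by
  refine .mk fun T hT hTA ↦ ?_
  rw [Measure.map_apply hX hT] at hTA ⊢
  have hind : Integrable (ind A) P := (integrable_const 1).indicator hA
  have hpint : Integrable (p ∘ X) P := by
    have := hp.ae_eq_condExp hX .univ hind.restrict
    rw [Measure.restrict_univ] at this
    exact integrable_condExp.congr this.symm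
  have hzero : ∫ ω in X ⁻¹' T, p (X ω) ∂P = 0 := by
    have := CondMeanEq.setIntegral_preimage_eq hp.2 hX .univ hT
    rw [Measure.restrict_univ] at this
    rw [← this, ind, integral_indicator hA, Measure.restrict_restrict hA, inter_comm,
      ← Measure.restrict_restrict (hX hT), Measure.restrict_eq_zero.2 hTA, integral_zero_measure]
  have hp_eq_zero : (fun ω ↦ p (X ω)) =ᵐ[P.restrict (X ⁻¹' T)] 0 :=
    (setIntegral_eq_zero_iff_of_nonneg_ae (ae_restrict_of_ae (hppos.mono fun _ ↦ le_of_lt))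
      hpint.integrableOn).1 hzero
  have hfalse : ∀ᵐ _ ∂P.restrict (X ⁻¹' T), False := by
    filter_upwards [hp_eq_zero, ae_restrict_of_ae hppos] with ω h0 hpos using hpos.ne' h0
  simpa [ae_iff] using hfalse

lemma IsCondMeanGiven.ae_eq_comp_of_restrict [IsFiniteMeasure P]
    (hp : IsCondMeanGiven P X univ (ind A) p) (hppos : ∀ᵐ ω ∂P, 0 < p (X ω))
    (hX : Measurable X) (hA : MeasurableSet A) {u v : 𝓧 → ℝ} (hu : Measurable u)
    (hv : Measurable v) (h : u ∘ X =ᵐ[P.restrict A] v ∘ X) : u ∘ X =ᵐ[P] v ∘ X :=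
  ae_eq_comp' hX.aemeasurable ((ae_map_iff hX.aemeasurable (measurableSet_eq_fun hu hv)).2 h)
    (hp.map_absolutelyContinuous_map_restrict hppos hX hA)

end CondMean

section DifferenceInDifferences

variable [MeasurableSpace Ω] [m𝓧 : MeasurableSpace 𝓧] {P : Measure Ω} [IsFiniteMeasure P]
  {X : Ω → 𝓧} {A B : Set Ω} {Y0 Y2 Y0A Y2A Y0B Y2B : Ω → ℝ} {mA mB g tr pA pB : 𝓧 → ℝ}

lemma ae_eq_add_trend_of_noAnticipation (hX : Measurable X) (hA : MeasurableSet A)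
    (hY0A : Integrable Y0A (P.restrict A)) (hY2A : Integrable Y2A (P.restrict A))
    (hY0B : Integrable Y0B (P.restrict A)) (hY2B : Integrable Y2B (P.restrict A))
    (hNA : CondMeanEq P X A Y0A Y0B)
    (hmA : IsCondMeanGiven P X A (fun ω ↦ Y2A ω - Y0A ω) mA)
    (hg : IsCondMeanGiven P X A (fun ω ↦ Y2A ω - Y2B ω) g)
    (htr : IsCondMeanGiven P X A (fun ω ↦ Y2B ω - Y0B ω) tr) :
    mA ∘ X =ᵐ[P.restrict A] g ∘ X + tr ∘ X := by
  let E (Z : Ω → ℝ) : Ω → ℝ := (P.restrict A)[Z | m𝓧.comap X]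
  calc mA ∘ X
    _ =ᵐ[P.restrict A] E (Y2A - Y0A) := hmA.ae_eq_condExp hX hA (hY2A.sub hY0A)
    _ =ᵐ[P.restrict A] E Y2A - E Y0A := condExp_sub hY2A hY0A _
    _ =ᵐ[P.restrict A] E Y2A - E Y0B := .sub .rfl (hNA.condExp_ae_eq hX hA hY0A hY0B)
    _ =ᵐ[P.restrict A] E (Y2A - Y0B) := (condExp_sub hY2A hY0B _).symm
    _ = E ((Y2A - Y2B) + (Y2B - Y0B)) := by rw [sub_add_sub_cancel]
    _ =ᵐ[P.restrict A] E (Y2A - Y2B) + E (Y2B - Y0B) :=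
      condExp_add (hY2A.sub hY2B) (hY2B.sub hY0B) _
    _ =ᵐ[P.restrict A] g ∘ X + tr ∘ X :=
      (hg.ae_eq_condExp hX hA (hY2A.sub hY2B)).symm.add
        (htr.ae_eq_condExp hX hA (hY2B.sub hY0B)).symm

/-- `A` and `B` are the groups `{D = d}` and `{D = d'}` of an arbitrary, not necessarily binary,
treatment; `YtA` and `YtB` are the potential outcomes under `d` and `d'` in period `t`. -/
theorem statement_14_general (hX : Measurable X) (hA : MeasurableSet A) (hB : MeasurableSet B)
    (hY0A : Integrable Y0A P) (hY2A : Integrable Y2A P)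
    (hY0B : Integrable Y0B P) (hY2B : Integrable Y2B P)
    (hcons0A : EqOn Y0 Y0A A) (hcons2A : EqOn Y2 Y2A A)
    (hcons0B : EqOn Y0 Y0B B) (hcons2B : EqOn Y2 Y2B B)
    (hpA : IsCondMeanGiven P X univ (ind A) pA) (hpB : IsCondMeanGiven P X univ (ind B) pB)
    (hpApos : ∀ᵐ ω ∂P, 0 < pA (X ω)) (hpBpos : ∀ᵐ ω ∂P, 0 < pB (X ω))
    (hNA : CondMeanEq P X A Y0A Y0B)
    (hPTA : ∃ tr : 𝓧 → ℝ, IsCondMeanGiven P X univ (fun ω ↦ Y2B ω - Y0B ω) tr ∧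
      IsCondMeanGiven P X A (fun ω ↦ Y2B ω - Y0B ω) tr)
    (hPTB : ∃ tr : 𝓧 → ℝ, IsCondMeanGiven P X univ (fun ω ↦ Y2B ω - Y0B ω) tr ∧
      IsCondMeanGiven P X B (fun ω ↦ Y2B ω - Y0B ω) tr)
    (hmA : IsCondMeanGiven P X A (fun ω ↦ Y2 ω - Y0 ω) mA)
    (hmB : IsCondMeanGiven P X B (fun ω ↦ Y2 ω - Y0 ω) mB)
    (hg : IsCondMeanGiven P X A (fun ω ↦ Y2A ω - Y2B ω) g) :
    ∀ᵐ ω ∂P, mA (X ω) - mB (X ω) = g (X ω) := by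
  obtain ⟨trA, htrA_univ, htrA⟩ := hPTA
  obtain ⟨trB, htrB_univ, htrB⟩ := hPTB
  have hYB : Integrable (fun ω ↦ Y2B ω - Y0B ω) P := hY2B.sub hY0B
  have trends : trA ∘ X =ᵐ[P] trB ∘ X := by
    simpa only [Measure.restrict_univ] using htrA_univ.ae_eq htrB_univ hX .univ hYB.restrict
  have treated : mA ∘ X =ᵐ[P] (g + trA) ∘ X :=
    hpA.ae_eq_comp_of_restrict hpApos hX hA hmA.1 (hg.1.add htrA.1) <|
      ae_eq_add_trend_of_noAnticipation hX hA hY0A.restrict hY2A.restrict hY0B.restrict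
        hY2B.restrict hNA (hmA.congr fun ω hω ↦ by simp only [hcons2A hω, hcons0A hω]) hg htrA
  have comparison : mB ∘ X =ᵐ[P] trB ∘ X :=
    hpB.ae_eq_comp_of_restrict hpBpos hX hB hmB.1 htrB.1 <|
      (hmB.congr fun ω hω ↦ by simp only [hcons2B hω, hcons0B hω]).ae_eq htrB hX hB hYB.restrict
  filter_upwards [trends, treated, comparison] with ω htrends htreated hcomparison
  simp only [Function.comp_apply, Pi.add_apply] at htrends htreated hcomparison
  rw [htreated, hcomparison, htrends, add_sub_cancel_right]

end DifferenceInDifferences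

lemma threePaths_subset_allPaths : threePaths ⊆ allPaths := by
  rintro d (rfl | rfl | rfl) <;> simp [allPaths]

lemma measurableSet_evD [MeasurableSpace Ω] {D1 D2 : Ω → ℝ} (hD1 : Measurable D1)
    (hD2 : Measurable D2) (d : ℝ × ℝ) : MeasurableSet (evD D1 D2 d) :=
  (hD1 (measurableSet_singleton d.1)).inter (hD2 (measurableSet_singleton d.2))

lemma eqOn_evD {D1 D2 Y : Ω → ℝ} {Yp : ℝ × ℝ → Ω → ℝ} (hcons : ∀ ω, Y ω = Yp (D1 ω, D2 ω) ω)
    (d : ℝ × ℝ) : EqOn Y (Yp d) (evD D1 D2 d) := by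
  rintro ω ⟨h1, h2⟩
  rw [hcons, h1, h2]

/-- Conditional ATT representation of the outcome-mean contrast:
`m_d(X) − m_{d'}(X) = E[Y₂(d) − Y₂(d') ∣ D = d, X]` a.s. -/
theorem statement_14
    [MeasurableSpace Ω] [m𝓧 : MeasurableSpace 𝓧]
    (P : Measure Ω) [IsProbabilityMeasure P]
    (X : Ω → 𝓧) (hX : Measurable X)
    (Y0 Y2 D1 D2 : Ω → ℝ)
    (hY0 : Measurable Y0) (hY2 : Measurable Y2)
    (hD1 : Measurable D1) (hD2 : Measurable D2)
    (hY0i : Integrable Y0 P) (hY2i : Integrable Y2 P)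
    (hD1v : ∀ ω, D1 ω = 0 ∨ D1 ω = 1) (hD2v : ∀ ω, D2 ω = 0 ∨ D2 ω = 1)
    (Y0p Y2p : ℝ × ℝ → Ω → ℝ)
    (hY0p : ∀ e ∈ allPaths, Measurable (Y0p e) ∧ Integrable (Y0p e) P)
    (hY2p : ∀ e ∈ allPaths, Measurable (Y2p e) ∧ Integrable (Y2p e) P)
    (hcons0 : ∀ ω, Y0 ω = Y0p (D1 ω, D2 ω) ω)
    (hcons2 : ∀ ω, Y2 ω = Y2p (D1 ω, D2 ω) ω)
    (d : ℝ × ℝ) (hd : d ∈ threePaths)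
    (pd pd' : 𝓧 → ℝ)
    (hpd : IsCondMeanGiven P X Set.univ (ind (evD D1 D2 d)) pd)
    (hpd' : IsCondMeanGiven P X Set.univ (ind (evD D1 D2 (0, 0))) pd')
    (hpdpos : ∀ᵐ ω ∂P, 0 < pd (X ω)) (hpd'pos : ∀ᵐ ω ∂P, 0 < pd' (X ω))
    (hNA : ∀ h : 𝓧 → ℝ, Measurable h → (∃ C, ∀ x, |h x| ≤ C) →
        ∫ ω, ind (evD D1 D2 d) ω * Y0p d ω * h (X ω) ∂P
          = ∫ ω, ind (evD D1 D2 d) ω * Y0p (0, 0) ω * h (X ω) ∂P)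
    (hPTd : ∃ tr : 𝓧 → ℝ,
        IsCondMeanGiven P X Set.univ (fun ω => Y2p (0, 0) ω - Y0p (0, 0) ω) tr ∧
        IsCondMeanGiven P X (evD D1 D2 d) (fun ω => Y2p (0, 0) ω - Y0p (0, 0) ω) tr)
    (hPTd' : ∃ tr : 𝓧 → ℝ,
        IsCondMeanGiven P X Set.univ (fun ω => Y2p (0, 0) ω - Y0p (0, 0) ω) tr ∧
        IsCondMeanGiven P X (evD D1 D2 (0, 0)) (fun ω => Y2p (0, 0) ω - Y0p (0, 0) ω) tr)
    (md md' : 𝓧 → ℝ)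
    (hmd : IsCondMeanGiven P X (evD D1 D2 d) (fun ω => Y2 ω - Y0 ω) md)
    (hmd' : IsCondMeanGiven P X (evD D1 D2 (0, 0)) (fun ω => Y2 ω - Y0 ω) md')
    (g : 𝓧 → ℝ)
    (hg : IsCondMeanGiven P X (evD D1 D2 d) (fun ω => Y2p d ω - Y2p (0, 0) ω) g) :
    ∀ᵐ ω ∂P, md (X ω) - md' (X ω) = g (X ω) := by
  have h0 : ((0, 0) : ℝ × ℝ) ∈ allPaths := by simp [allPaths]
  have hd' := threePaths_subset_allPaths hd
  exact statement_14_general hX (measurableSet_evD hD1 hD2 d) (measurableSet_evD hD1 hD2 (0, 0))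
    (hY0p d hd').2 (hY2p d hd').2 (hY0p _ h0).2 (hY2p _ h0).2
    (eqOn_evD hcons0 d) (eqOn_evD hcons2 d) (eqOn_evD hcons0 (0, 0)) (eqOn_evD hcons2 (0, 0))
    hpd hpd' hpdpos hpd'pos hNA hPTd hPTd' hmd hmd' hg

end DIDMissing
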